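/- arXiv:0805.2047 — 2 statements merged into one kernel-verified Lean document; each statement's English description precedes it below -/
import Mathlib

section
/- Let q > 1 be a non-integer real number and let G_q' be the intersection of the sets U_r' over all r > q with ⌈q⌉ = ⌈r⌉. Then G_q' = V_q'. -/
/-!
Write `M = ⌈q⌉ - 1` and `π_r(c) = ∑ c_i r^{-i-1}`. Both sides of the identity are shown to consist of
the sequences with digits in `{0, …, M}` such that, for every `n`,

* `c_n < M` implies `π_q(c_{n+1} c_{n+2} …) ≤ 1`, and
* `c_n > 0` implies `π_q(M - c_{n+1}, M - c_{n+2}, …) ≤ 1` (`Admissible q M c`).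

A sequence lies in `𝒰_r'` exactly when these inequalities hold strictly in base `r`
(`mem_USeq_iff`): a failure lets one digit be raised or lowered by one and the tail be re-expanded,
and two expansions of the same number produce a failure at the first place where they differ.
Since `r π_r ≤ q π_q` for `q < r` and each partial sum of `π_r` is continuous in `r`, the strict
inequalities for all `r > q` amount to the weak inequality at `q` (`mem_iInter_iff`).

For `𝒱_q'`, the first condition, together with no nonzero digit being followed by zeros only,
characterizes quasi-greedy expansions. In the second condition the numerical inequality `π_q(d) ≤ 1` has to be
traded for the lexicographic one `d ≤ α(q)`. If `d > α(q)`, then the prefix of `d` up to the first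
difference already has value at least `1`, so `d` continues with zeros, which the first
condition forbids because `π_q(M^∞) > 1` for non-integer `q` (`lexLe_of_admissible`).
Conversely, if all reflected tails following a positive digit are `≤ α(q)`, the excess of their
values over `1` contracts by a factor `q` at each comparison and hence is not positive
(`val_le_one_of_lex`).
-/


noncomputable section

/-- The largest integer smaller than `q`, as a natural number (for `q > 1` this is `⌈q⌉ - 1`). -/
def topDigit (q : ℝ) : ℕ := ⌈q⌉.toNat - 1

/-- Greedy digit associated to a remainder `y` : the largest nonnegative integer `b` with
`b < q` and `b ≤ q * y`. -/
def gDigit (q y : ℝ) : ℕ := min (topDigit q) ⌊q * y⌋₊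

/-- Remainders of the greedy algorithm in base `q` starting from `x`. -/
def gRem (q x : ℝ) : ℕ → ℝ
  | 0 => x
  | n + 1 => q * gRem q x n - gDigit q (gRem q x n)

/-- The greedy expansion of `x` in base `q`, `0`-indexed: `greedy q x n` is the digit `b_{n+1}`,
i.e. the largest integer smaller than `q` such that `∑_{i ≤ n} (greedy q x i) / q^(i+1) ≤ x`. -/
def greedy (q x : ℝ) (n : ℕ) : ℕ := gDigit q (gRem q x n)

/-- Quasi-greedy digit associated to a remainder `y` : the largest nonnegative integer `b` with
`b < q` and `b < q * y` (it is `0` when no such integer exists, matching the convention that the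
quasi-greedy expansion of `0` is `0^∞`). -/
def qgDigit (q y : ℝ) : ℕ := min (topDigit q) (⌈q * y⌉.toNat - 1)

/-- Remainders of the quasi-greedy algorithm in base `q` starting from `x`. -/
def qgRem (q x : ℝ) : ℕ → ℝ
  | 0 => x
  | n + 1 => q * qgRem q x n - qgDigit q (qgRem q x n)

/-- The quasi-greedy expansion of `x` in base `q`, `0`-indexed: `quasiGreedy q x n` is the digit
`a_{n+1}`, i.e. the largest integer smaller than `q` with `∑_{i ≤ n} (quasiGreedy q x i) / q^(i+1) < x`
(with the convention `quasiGreedy q 0 = 0^∞`). -/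
def quasiGreedy (q x : ℝ) (n : ℕ) : ℕ := qgDigit q (qgRem q x n)

/-- `alphaSeq q` is the quasi-greedy expansion of `1` in base `q` (`0`-indexed:
`alphaSeq q (i-1) = α_i(q)`). -/
def alphaSeq (q : ℝ) : ℕ → ℕ := quasiGreedy q 1

/-- Strict lexicographic order on digit sequences. -/
def lexLt (a b : ℕ → ℕ) : Prop := ∃ n, (∀ i, i < n → a i = b i) ∧ a n < b n

/-- Lexicographic order on digit sequences. -/
def lexLe (a b : ℕ → ℕ) : Prop := lexLt a b ∨ a = b

/-- `c` is an expansion of `x` in base `q`: the digits are nonnegative integers smaller than `q`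
and `x = ∑_{i≥0} c_i / q^(i+1)`. -/
def IsExpansion (q : ℝ) (c : ℕ → ℕ) (x : ℝ) : Prop :=
  (∀ i, (c i : ℝ) < q) ∧ x = ∑' i : ℕ, (c i : ℝ) / q ^ (i + 1)

/-- The interval `J_q = [0, (⌈q⌉-1)/(q-1)]` of numbers having an expansion in base `q`. -/
def Jset (q : ℝ) : Set ℝ := Set.Icc 0 (((⌈q⌉ : ℝ) - 1) / (q - 1))

/-- `USet q` is the set `𝒰_q` of numbers `x ∈ J_q` having a unique expansion in base `q`. -/
def USet (q : ℝ) : Set ℝ := {x | x ∈ Jset q ∧ ∃! c, IsExpansion q c x}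

/-- `USeq q` is the set `𝒰_q'` of univoque sequences in base `q`, i.e. sequences that are the
unique expansion in base `q` of some number. -/
def USeq (q : ℝ) : Set (ℕ → ℕ) :=
  {c | ∃ x, IsExpansion q c x ∧ ∀ c', IsExpansion q c' x → c' = c}

/-- The set `𝒰` of univoque bases: `q > 1` such that `1` has a unique expansion in base `q`. -/
def UnivBases : Set ℝ := {q | 1 < q ∧ ∃! c, IsExpansion q c 1}

/-- The set `𝒱_q`: numbers `x ∈ J_q` whose quasi-greedy expansion `(a_i)` satisfies
`overline{a_{n+1} a_{n+2} …} ≤ α_1 α_2 …` whenever `a_n > 0`. -/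
def VSet (q : ℝ) : Set ℝ :=
  {x | x ∈ Jset q ∧ ∀ n, 0 < quasiGreedy q x n →
    lexLe (fun i => topDigit q - quasiGreedy q x (n + 1 + i)) (alphaSeq q)}

/-- `VSeq q` is the set `𝒱_q'` of quasi-greedy expansions of elements of `𝒱_q`. -/
def VSeq (q : ℝ) : Set (ℕ → ℕ) := (fun x => quasiGreedy q x) '' VSet q

/-- The set `𝒱` of bases `q > 1` with `overline{α_{k+1} α_{k+2} …} ≤ α_1 α_2 …` for all `k ≥ 1`. -/
def VBases : Set ℝ :=
  {q | 1 < q ∧ ∀ k, 1 ≤ k → lexLe (fun i => topDigit q - alphaSeq q (k + i)) (alphaSeq q)}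

/-- A digit sequence is infinite if it has infinitely many nonzero terms. -/
def InfiniteSeq (c : ℕ → ℕ) : Prop := ∀ N, ∃ i, N ≤ i ∧ c i ≠ 0

/-- A digit sequence is ultimately periodic if some tail of it is periodic. -/
def UltimatelyPeriodic (c : ℕ → ℕ) : Prop := ∃ n p, 0 < p ∧ ∀ i, n ≤ i → c (i + p) = c i

end

/-- The value `∑ c_i / q^(i+1)` of a digit sequence in base `q`. -/
noncomputable def val (q : ℝ) (c : ℕ → ℕ) : ℝ := ∑' i : ℕ, (c i : ℝ) / q ^ (i + 1)

/-- The sequence with its first `n` digits removed. -/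
def tail (c : ℕ → ℕ) (n : ℕ) : ℕ → ℕ := fun i => c (n + i)

/-- The reflection `c_i ↦ M - c_i` of a digit sequence; the subtraction is meant for digits at
most `M`. -/
def reflect (M : ℕ) (c : ℕ → ℕ) : ℕ → ℕ := fun i => M - c i

/-- The numerical description, in base `q`, common to the two sides of the main theorem. -/
def Admissible (q : ℝ) (M : ℕ) (c : ℕ → ℕ) : Prop :=
  (∀ i, c i ≤ M) ∧ ∀ n, (c n < M → val q (tail c (n + 1)) ≤ 1) ∧
    (0 < c n → val q (reflect M (tail c (n + 1))) ≤ 1)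

/-! ### Values of digit sequences -/

section Values

variable {q : ℝ} {M : ℕ} {c : ℕ → ℕ}

theorem hasSum_const (hq : 1 < q) (M : ℕ) :
    HasSum (fun i : ℕ => (M : ℝ) / q ^ (i + 1)) (M / (q - 1)) := by
  have h := (hasSum_geometric_of_lt_one (r := q⁻¹) (by positivity)
    (inv_lt_one_of_one_lt₀ hq)).mul_left ((M : ℝ) / q)
  have h1 : q - 1 ≠ 0 := by linarith
  have h2 : q ≠ 0 := by linarith
  have e1 : (fun i : ℕ => (M : ℝ) / q ^ (i + 1)) = fun i : ℕ => (M : ℝ) / q * q⁻¹ ^ i := by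
    funext i
    rw [pow_succ, inv_pow]
    field_simp
  have e2 : (M : ℝ) / (q - 1) = M / q * (1 - q⁻¹)⁻¹ := by
    rw [show 1 - q⁻¹ = (q - 1) / q by field_simp]
    field_simp
  rw [e1, e2]
  exact h

theorem summable_val (hq : 1 < q) (hc : ∀ i, c i ≤ M) :
    Summable (fun i : ℕ => (c i : ℝ) / q ^ (i + 1)) := by
  refine Summable.of_nonneg_of_le (fun i => by positivity) (fun i => ?_) (hasSum_const hq M).summable
  have : (c i : ℝ) ≤ M := by exact_mod_cast hc i
  gcongr

theorem val_nonneg (hq : 1 < q) : 0 ≤ val q c :=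
  tsum_nonneg (fun i => by positivity)

theorem val_le (hq : 1 < q) (hc : ∀ i, c i ≤ M) : val q c ≤ M / (q - 1) := by
  rw [← (hasSum_const hq M).tsum_eq]
  refine (summable_val hq hc).tsum_le_tsum (fun i => ?_) (hasSum_const hq M).summable
  have : (c i : ℝ) ≤ M := by exact_mod_cast hc i
  gcongr

theorem val_add_reflect (hq : 1 < q) (hc : ∀ i, c i ≤ M) :
    val q c + val q (reflect M c) = M / (q - 1) := by
  rw [← (hasSum_const hq M).tsum_eq, val, val,
    ← (summable_val hq hc).tsum_add
      (summable_val hq (c := reflect M c) (M := M) (fun i => Nat.sub_le _ _))]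
  congr 1
  funext i
  rw [reflect, Nat.cast_sub (hc i)]
  ring

theorem val_step (hq : 1 < q) (hc : ∀ i, c i ≤ M) (n : ℕ) :
    q * val q (tail c n) = c n + val q (tail c (n + 1)) := by
  have h0 : q ≠ 0 := by linarith
  have hs : Summable (fun i : ℕ => (tail c n i : ℝ) / q ^ (i + 1)) :=
    summable_val hq (fun i => hc _)
  rw [val, hs.tsum_eq_zero_add, mul_add, val, ← tsum_mul_left]
  congr 1
  · simp only [tail]
    field_simp
    simp
  · congr 1
    funext i
    simp only [tail]
    rw [show n + (i + 1) = n + 1 + i by ring, pow_succ]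
    field_simp

theorem tail_zero : tail c 0 = c := by
  funext i
  simp [tail]

/-- A bounded sequence that is multiplied by `q > 1` at each step vanishes. -/
theorem eq_zero_of_bounded (hq : 1 < q) {e : ℕ → ℝ} {C : ℝ} (hb : ∀ n, |e n| ≤ C)
    (hs : ∀ n, q * e n = e (n + 1)) : e 0 = 0 := by
  have h1 : ∀ n, q ^ n * e 0 = e n := by
    intro n
    induction n with
    | zero => simp
    | succ k ih => rw [← hs, ← ih]; ring
  by_contra h
  have hpos : 0 < |e 0| := abs_pos.mpr h
  obtain ⟨n, hn⟩ := pow_unbounded_of_one_lt (C / |e 0|) hq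
  have h2 := hb n
  rw [← h1 n, abs_mul, abs_of_pos (by positivity)] at h2
  rw [div_lt_iff₀ hpos] at hn
  linarith

end Values

/-! ### Quasi-greedy expansions -/

section QuasiGreedy

variable {q : ℝ} {M : ℕ}

theorem topDigit_eq (hM : ⌈q⌉ = (M : ℤ) + 1) : topDigit q = M := by
  rw [topDigit, hM]
  omega

theorem base_le (hM : ⌈q⌉ = (M : ℤ) + 1) : q ≤ M + 1 := by
  have := Int.le_ceil q
  rw [hM] at this
  exact_mod_cast this

theorem top_lt (hM : ⌈q⌉ = (M : ℤ) + 1) : (M : ℝ) < q := by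
  have := Int.ceil_lt_add_one q
  rw [hM] at this
  push_cast at this
  linarith

theorem digit_lt_iff (hM : ⌈q⌉ = (M : ℤ) + 1) (k : ℕ) : (k : ℝ) < q ↔ k ≤ M := by
  constructor
  · intro h
    have : (k : ℝ) < M + 1 := h.trans_le (base_le hM)
    have : k < M + 1 := by exact_mod_cast this
    omega
  · intro h
    have : (k : ℝ) ≤ M := by exact_mod_cast h
    exact this.trans_lt (top_lt hM)

theorem qgDigit_le (hM : ⌈q⌉ = (M : ℤ) + 1) (y : ℝ) : qgDigit q y ≤ M := by
  rw [qgDigit, topDigit_eq hM]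
  exact min_le_left _ _

theorem le_of_qgDigit_lt (hM : ⌈q⌉ = (M : ℤ) + 1) {y : ℝ} (h : qgDigit q y < M) :
    q * y ≤ qgDigit q y + 1 := by
  have h1 : ⌈q * y⌉ ≤ (qgDigit q y : ℤ) + 1 := by
    rw [qgDigit, topDigit_eq hM] at *
    omega
  have := Int.ceil_le.mp h1
  exact_mod_cast this

theorem qgDigit_le_mul (hq : 1 < q) {y : ℝ} (hy : 0 ≤ y) : (qgDigit q y : ℝ) ≤ q * y := by
  rcases Nat.eq_zero_or_pos (qgDigit q y) with h | h
  · rw [h]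
    simp only [Nat.cast_zero]
    positivity
  · have h1 : (qgDigit q y : ℤ) < ⌈q * y⌉ := by
      rw [qgDigit] at *
      omega
    have := Int.lt_ceil.mp h1
    exact_mod_cast this.le

theorem qgDigit_eq_of_pos (hM : ⌈q⌉ = (M : ℤ) + 1) {y z : ℝ} {k : ℕ} (hk : k ≤ M)
    (hy : q * y = k + z) (hz : 0 < z) (hz1 : k < M → z ≤ 1) : qgDigit q y = k := by
  have h1 : (k : ℤ) < ⌈q * y⌉ := by
    rw [Int.lt_ceil]
    push_cast
    linarith
  rcases hk.lt_or_eq with h | h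
  · have h2 : ⌈q * y⌉ ≤ (k : ℤ) + 1 := by
      rw [Int.ceil_le]
      push_cast
      linarith [hz1 h]
    rw [qgDigit, topDigit_eq hM]
    omega
  · rw [qgDigit, topDigit_eq hM]
    omega

theorem one_le_top (hq : 1 < q) (hM : ⌈q⌉ = (M : ℤ) + 1) : 1 ≤ (M : ℝ) / (q - 1) := by
  rw [le_div_iff₀ (by linarith)]
  linarith [base_le hM]

theorem qgRem_mem (hq : 1 < q) (hM : ⌈q⌉ = (M : ℤ) + 1) {x : ℝ}
    (hx : x ∈ Set.Icc 0 ((M : ℝ) / (q - 1))) (n : ℕ) :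
    qgRem q x n ∈ Set.Icc 0 ((M : ℝ) / (q - 1)) := by
  induction n with
  | zero => exact hx
  | succ k ih =>
    rw [qgRem]
    refine ⟨by linarith [qgDigit_le_mul hq ih.1], ?_⟩
    rcases (qgDigit_le hM (qgRem q x k)).lt_or_eq with h | h
    · linarith [le_of_qgDigit_lt hM h, one_le_top hq hM]
    · rw [h]
      have h1 : q - 1 ≠ 0 := by linarith
      have h2 : q * ((M : ℝ) / (q - 1)) - M = M / (q - 1) := by
        field_simp
        ring
      have h3 : q * qgRem q x k ≤ q * ((M : ℝ) / (q - 1)) :=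
        mul_le_mul_of_nonneg_left ih.2 (by linarith)
      linarith

theorem quasiGreedy_le (hM : ⌈q⌉ = (M : ℤ) + 1) (x : ℝ) (n : ℕ) : quasiGreedy q x n ≤ M :=
  qgDigit_le hM _

/-- The remainders of the quasi-greedy algorithm are the values of the tails of the expansion. -/
theorem val_tail_quasiGreedy (hq : 1 < q) (hM : ⌈q⌉ = (M : ℤ) + 1) {x : ℝ}
    (hx : x ∈ Set.Icc 0 ((M : ℝ) / (q - 1))) (n : ℕ) :
    val q (tail (quasiGreedy q x) n) = qgRem q x n := by
  have key := eq_zero_of_bounded hq (C := (M : ℝ) / (q - 1))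
    (e := fun k => val q (tail (quasiGreedy q x) (n + k)) - qgRem q x (n + k))
    (fun k => by
      have h1 := qgRem_mem hq hM hx (n + k)
      have h2 := val_nonneg hq (c := tail (quasiGreedy q x) (n + k))
      have h3 := val_le hq (c := tail (quasiGreedy q x) (n + k))
        (fun i => quasiGreedy_le hM x (n + k + i))
      rw [abs_le]
      constructor <;> linarith [h1.1, h1.2])
    (fun k => by
      have h1 := val_step hq (quasiGreedy_le hM x) (n + k)
      have h2 : qgRem q x (n + k + 1) = q * qgRem q x (n + k) - quasiGreedy q x (n + k) := rfl
      rw [← add_assoc, mul_sub, h1, h2]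
      ring)
  simp only [add_zero] at key
  linarith

theorem isExpansion_quasiGreedy (hq : 1 < q) (hM : ⌈q⌉ = (M : ℤ) + 1) {x : ℝ}
    (hx : x ∈ Set.Icc 0 ((M : ℝ) / (q - 1))) : IsExpansion q (quasiGreedy q x) x := by
  refine ⟨fun i => (digit_lt_iff hM _).mpr (quasiGreedy_le hM x i), ?_⟩
  have := val_tail_quasiGreedy hq hM hx 0
  rw [tail_zero] at this
  exact this.symm

end QuasiGreedy

/-! ### Unique expansions -/

section Unique

variable {q : ℝ} {M : ℕ}

theorem val_tail_congr (hq : 1 < q) {c c' : ℕ → ℕ} (hc : ∀ i, c i ≤ M) (hc' : ∀ i, c' i ≤ M)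
    (hv : val q c = val q c') (n : ℕ) (h : ∀ i < n, c i = c' i) :
    val q (tail c n) = val q (tail c' n) := by
  induction n with
  | zero => simpa [tail_zero] using hv
  | succ k ih =>
    have h1 := ih (fun i hi => h i (by omega))
    have h2 := val_step hq hc k
    have h3 := val_step hq hc' k
    have h4 : (c k : ℝ) = c' k := by rw [h k (by omega)]
    rw [h1] at h2
    linarith

/-- The sequence following `c` up to place `n`, then the digit `d`, then `t`. -/
def splice (c : ℕ → ℕ) (n d : ℕ) (t : ℕ → ℕ) : ℕ → ℕ :=
  fun i => if i < n then c i else if i = n then d else t (i - (n + 1))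

theorem splice_le {c t : ℕ → ℕ} {n d : ℕ} (hc : ∀ i, c i ≤ M) (hd : d ≤ M) (ht : ∀ i, t i ≤ M)
    (i : ℕ) : splice c n d t i ≤ M := by
  unfold splice
  split_ifs
  · exact hc i
  · exact hd
  · exact ht _

theorem val_splice (hq : 1 < q) {c t : ℕ → ℕ} {n d : ℕ} (hc : ∀ i, c i ≤ M) (hd : d ≤ M)
    (ht : ∀ i, t i ≤ M) (h : (c n : ℝ) + val q (tail c (n + 1)) = d + val q t) :
    val q (splice c n d t) = val q c := by
  have hs : ∀ i, splice c n d t i ≤ M := splice_le hc hd ht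
  have hq0 : q ≠ 0 := by linarith
  have ht' : tail (splice c n d t) (n + 1) = t := by
    funext i
    have h1 : ¬ (n + 1 + i < n) := by omega
    have h2 : ¬ (n + 1 + i = n) := by omega
    have h3 : n + 1 + i - (n + 1) = i := by omega
    simp only [tail, splice, h1, h2, h3, if_false]
  have hn : val q (tail (splice c n d t) n) = val q (tail c n) := by
    have h1 := val_step hq hs n
    have h2 := val_step hq hc n
    rw [ht', show splice c n d t n = d by simp [splice], ← h, ← h2] at h1
    exact mul_left_cancel₀ hq0 h1
  -- Agreement of the values propagates backwards through the common prefix.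
  have back : ∀ k ≤ n, val q (tail (splice c n d t) (n - k)) = val q (tail c (n - k)) := by
    intro k
    induction k with
    | zero => intro _; exact hn
    | succ k ih =>
      intro hk
      have h0 := ih (by omega)
      have h1 := val_step hq hs (n - (k + 1))
      have h2 := val_step hq hc (n - (k + 1))
      have h3 : splice c n d t (n - (k + 1)) = c (n - (k + 1)) := by
        unfold splice
        rw [if_pos (by omega)]
      rw [show n - (k + 1) + 1 = n - k by omega] at h1 h2
      rw [h3, h0, ← h2] at h1
      exact mul_left_cancel₀ hq0 h1
  have := back n le_rfl
  simpa [tail_zero] using this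

theorem mem_USeq_iff (hq : 1 < q) (hM : ⌈q⌉ = (M : ℤ) + 1) (c : ℕ → ℕ) :
    c ∈ USeq q ↔ (∀ i, c i ≤ M) ∧ ∀ n, (c n < M → val q (tail c (n + 1)) < 1) ∧
      (0 < c n → val q (reflect M (tail c (n + 1))) < 1) := by
  constructor
  · rintro ⟨x, ⟨hc, hx⟩, huniq⟩
    have hcM : ∀ i, c i ≤ M := fun i => (digit_lt_iff hM _).mp (hc i)
    have noalt : ∀ n d, d ≤ M → d ≠ c n → ¬ (c n : ℝ) + val q (tail c (n + 1)) - d ∈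
        Set.Icc 0 ((M : ℝ) / (q - 1)) := by
      intro n d hd hne hmem
      have hE := isExpansion_quasiGreedy hq hM hmem
      have ht := quasiGreedy_le hM ((c n : ℝ) + val q (tail c (n + 1)) - d)
      have hv : val q (splice c n d (quasiGreedy q _)) = val q c :=
        val_splice hq hcM hd ht (by
          have : (c n : ℝ) + val q (tail c (n + 1)) - d = val q (quasiGreedy q _) := hE.2
          linarith)
      have := huniq (splice c n d (quasiGreedy q _))
        ⟨fun i => (digit_lt_iff hM _).mpr (splice_le hcM hd ht i), hx.trans hv.symm⟩
      apply hne
      rw [← congrFun this n]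
      simp [splice]
    refine ⟨hcM, fun n => ⟨fun hn => ?_, fun hn => ?_⟩⟩
    · by_contra hge
      have hle := val_le hq (c := tail c (n + 1)) (fun i => hcM _)
      refine noalt n (c n + 1) hn (by omega) ⟨?_, ?_⟩ <;> push_cast <;> linarith
    · by_contra hge
      have hr := val_add_reflect hq (c := tail c (n + 1)) (fun i => hcM _)
      have h0 := val_nonneg hq (c := tail c (n + 1))
      have hcast : ((c n - 1 : ℕ) : ℝ) = c n - 1 := by
        rw [Nat.cast_sub hn, Nat.cast_one]
      refine noalt n (c n - 1) (by have := hcM n; omega) (by omega) ⟨?_, ?_⟩ <;>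
        rw [hcast] <;> linarith
  · rintro ⟨hcM, h⟩
    refine ⟨val q c, ⟨fun i => (digit_lt_iff hM _).mpr (hcM i), rfl⟩, ?_⟩
    rintro c' ⟨hc', hx'⟩
    have hcM' : ∀ i, c' i ≤ M := fun i => (digit_lt_iff hM _).mp (hc' i)
    by_contra hne
    obtain ⟨m, hm⟩ := Function.ne_iff.mp hne
    classical
    have hex : ∃ m, c' m ≠ c m := ⟨m, hm⟩
    set n := Nat.find hex with hndef
    have hn : c' n ≠ c n := Nat.find_spec hex
    have hlt : ∀ i < n, c i = c' i := fun i hi => (not_not.mp (Nat.find_min hex hi)).symm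
    have hv := val_tail_congr hq hcM hcM' hx' n hlt
    have h1 := val_step hq hcM n
    have h2 := val_step hq hcM' n
    rw [hv, h2] at h1
    rcases lt_or_gt_of_ne hn with hlt | hgt
    · have h3 := (h n).2 (by omega)
      have h4 := val_add_reflect hq (c := tail c (n + 1)) (fun i => hcM _)
      have h5 := val_le hq (c := tail c' (n + 1)) (fun i => hcM' _)
      have h6 : (c' n : ℝ) + 1 ≤ c n := by exact_mod_cast hlt
      linarith
    · have h3 := (h n).1 (hgt.trans_le (hcM' n))
      have h5 := val_nonneg hq (c := tail c' (n + 1))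
      have h6 : (c n : ℝ) + 1 ≤ c' n := by exact_mod_cast hgt
      linarith

end Unique

/-! ### The intersection over larger bases -/

section Intersection

variable {q : ℝ} {M : ℕ}

theorem val_lt_one_of_lt {r : ℝ} (hq : 1 < q) (hr : q < r) {c : ℕ → ℕ} (hc : ∀ i, c i ≤ M)
    (h : val q c ≤ 1) : val r c < 1 := by
  have hq0 : 0 < q := by linarith
  have hr0 : 0 < r := by linarith
  have h1 : val r c ≤ q / r * val q c := by
    rw [val, val, ← tsum_mul_left]
    refine (summable_val (hq.trans hr) hc).tsum_le_tsum (fun i => ?_)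
      ((summable_val hq hc).mul_left _)
    have e1 : q / r * ((c i : ℝ) / q ^ (i + 1)) = c i / (r * q ^ i) := by
      rw [pow_succ]
      field_simp
    rw [e1, pow_succ']
    gcongr
  have h2 : q / r < 1 := (div_lt_one hr0).mpr hr
  have h3 : q / r * val q c ≤ q / r := mul_le_of_le_one_right (by positivity) h
  linarith

theorem val_le_one_of_forall (hq : 1 < q) {b : ℝ} (hb : q < b) {c : ℕ → ℕ} (hc : ∀ i, c i ≤ M)
    (h : ∀ r, q < r → r < b → val r c < 1) : val q c ≤ 1 := by
  refine Real.tsum_le_of_sum_range_le (fun i => by positivity) (fun n => ?_)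
  have hcont : ContinuousAt (fun r : ℝ => ∑ i ∈ Finset.range n, (c i : ℝ) / r ^ (i + 1)) q := by
    have hq0 : q ≠ 0 := by linarith
    refine tendsto_finsetSum _ (fun i _ => ?_)
    exact ContinuousAt.div continuousAt_const (by fun_prop) (pow_ne_zero _ hq0)
  refine le_of_tendsto (hcont.tendsto.mono_left (nhdsWithin_le_nhds (s := Set.Ioi q))) ?_
  filter_upwards [Ioo_mem_nhdsGT hb] with r hr
  have hr0 : 0 < r := by linarith [hr.1]
  exact ((summable_val (hq.trans hr.1) hc).sum_le_tsum _ (fun i _ => by positivity)).trans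
    (h r hr.1 hr.2).le

theorem mem_iInter_iff (hq : 1 < q) (hM : ⌈q⌉ = (M : ℤ) + 1) (hlt : q < M + 1) (c : ℕ → ℕ) :
    c ∈ (⋂ r ∈ {r : ℝ | q < r ∧ ⌈q⌉ = ⌈r⌉}, USeq r) ↔ Admissible q M c := by
  simp only [Set.mem_iInter, Set.mem_ofPred_eq]
  constructor
  · intro h
    have hceil : ∀ r, q < r → r ≤ (M : ℝ) + 1 → ⌈q⌉ = ⌈r⌉ := by
      intro r h1 h2
      apply le_antisymm (Int.ceil_le_ceil h1.le)
      rw [hM, Int.ceil_le]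
      push_cast
      exact h2
    have h' : ∀ r, q < r → r ≤ (M : ℝ) + 1 → _ := fun r h1 h2 =>
      (mem_USeq_iff (hq.trans h1) ((hceil r h1 h2).symm.trans hM) c).mp (h r ⟨h1, hceil r h1 h2⟩)
    have hcM := (h' _ hlt le_rfl).1
    refine ⟨hcM, fun n => ⟨fun hn => ?_, fun hn => ?_⟩⟩
    · exact val_le_one_of_forall hq hlt (fun i => hcM _)
        (fun r h1 h2 => ((h' r h1 h2.le).2 n).1 hn)
    · exact val_le_one_of_forall hq hlt (M := M) (fun i => Nat.sub_le _ _)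
        (fun r h1 h2 => ((h' r h1 h2.le).2 n).2 hn)
  · rintro ⟨hcM, h⟩ r ⟨h1, h2⟩
    rw [mem_USeq_iff (hq.trans h1) (h2.symm.trans hM)]
    exact ⟨hcM, fun n => ⟨fun hn => val_lt_one_of_lt hq h1 (fun i => hcM _) ((h n).1 hn),
      fun hn => val_lt_one_of_lt hq h1 (M := M) (fun i => Nat.sub_le _ _) ((h n).2 hn)⟩⟩

end Intersection

/-! ### Lexicographic and numerical comparison with the expansion of one -/

section Lex

variable {q : ℝ} {M : ℕ}

theorem lexLt_of_not_lexLe {a b : ℕ → ℕ} (h : ¬ lexLe a b) : lexLt b a := by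
  classical
  have hne : a ≠ b := fun e => h (Or.inr e)
  have hex := Function.ne_iff.mp hne
  refine ⟨Nat.find hex, fun i hi => (not_not.mp (Nat.find_min hex hi)).symm, ?_⟩
  have h1 := Nat.find_spec hex
  by_contra h2
  exact h (Or.inl ⟨Nat.find hex, fun i hi => not_not.mp (Nat.find_min hex hi), by omega⟩)

theorem one_mem (hq : 1 < q) (hM : ⌈q⌉ = (M : ℤ) + 1) :
    (1 : ℝ) ∈ Set.Icc 0 ((M : ℝ) / (q - 1)) := ⟨zero_le_one, one_le_top hq hM⟩

/-- If `d` agrees with `α(q)` on the first `n` digits, the excess of `val q d` over `1` is that of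
the tails, scaled by `q ^ n`. -/
theorem excess_of_agree (hq : 1 < q) {d : ℕ → ℕ} (hd : ∀ i, d i ≤ M) (n : ℕ)
    (h : ∀ i < n, d i = alphaSeq q i) :
    q ^ n * (val q d - 1) = val q (tail d n) - qgRem q 1 n := by
  induction n with
  | zero => simp [tail_zero, qgRem]
  | succ k ih =>
    have h1 := ih (fun i hi => h i (by omega))
    have h2 := val_step hq hd k
    have h3 : qgRem q 1 (k + 1) = q * qgRem q 1 k - alphaSeq q k := rfl
    rw [pow_succ', mul_assoc, h1, h3, ← h k (by omega)]
    linarith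

theorem lexLe_of_admissible (hq : 1 < q) (hM : ⌈q⌉ = (M : ℤ) + 1) (hlt : q < M + 1)
    {c : ℕ → ℕ} (hc : Admissible q M c) (n : ℕ) (hn : 0 < c n) :
    lexLe (reflect M (tail c (n + 1))) (alphaSeq q) := by
  by_contra hcon
  obtain ⟨m, heq, hm⟩ := lexLt_of_not_lexLe hcon
  have hd : ∀ i, reflect M (tail c (n + 1)) i ≤ M := fun i => Nat.sub_le _ _
  have h1 := excess_of_agree hq hd m (fun i hi => (heq i hi).symm)
  have h2 := (hc.2 n).2 hn
  have h3 : q ^ m * (val q (reflect M (tail c (n + 1))) - 1) ≤ 0 :=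
    mul_nonpos_of_nonneg_of_nonpos (by positivity) (by linarith)
  have h4 := val_step hq hd m
  have h5 : q * qgRem q 1 m ≤ alphaSeq q m + 1 :=
    le_of_qgDigit_lt hM (show alphaSeq q m < M from hm.trans_le (hd m))
  have h6 : (alphaSeq q m : ℝ) + 1 ≤ reflect M (tail c (n + 1)) m := by exact_mod_cast hm
  have h7 : q * val q (tail (reflect M (tail c (n + 1))) m) ≤ q * qgRem q 1 m :=
    mul_le_mul_of_nonneg_left (by linarith) (by linarith)
  -- The reflected sequence has value zero after place `m`, so the tail of `c` has maximal value.
  have h8 : val q (tail (reflect M (tail c (n + 1))) (m + 1)) ≤ 0 := by linarith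
  have h9 : tail (reflect M (tail c (n + 1))) (m + 1) = reflect M (tail c (n + 1 + m + 1)) := by
    funext i
    simp [tail, reflect, add_assoc]
  rw [h9] at h8
  have h10 := val_add_reflect hq (c := tail c (n + 1 + m + 1)) (fun i => hc.1 _)
  have h11 : c (n + 1 + m) < M := by
    have : 0 < M - c (n + 1 + m) := lt_of_le_of_lt (Nat.zero_le _) hm
    omega
  have h12 := (hc.2 (n + 1 + m)).1 h11
  have h13 : 1 < (M : ℝ) / (q - 1) := by
    rw [lt_div_iff₀ (by linarith)]
    linarith
  linarith

theorem val_le_one_of_lex (hq : 1 < q) (hM : ⌈q⌉ = (M : ℤ) + 1) {c : ℕ → ℕ}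
    (h : ∀ n, 0 < c n → lexLe (reflect M (tail c (n + 1))) (alphaSeq q)) (n : ℕ) (hn : 0 < c n) :
    val q (reflect M (tail c (n + 1))) ≤ 1 := by
  have hd : ∀ n i, reflect M (tail c n) i ≤ M := fun n i => Nat.sub_le _ _
  have key : ∀ k n, 0 < c n →
      q ^ k * (val q (reflect M (tail c (n + 1))) - 1) ≤ M / (q - 1) := by
    have htop : (0 : ℝ) ≤ M / (q - 1) := div_nonneg (by positivity) (by linarith)
    intro k
    induction k with
    | zero =>
      intro n _
      linarith [val_le hq (hd (n + 1))]
    | succ k ih =>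
      intro n hn
      rcases h n hn with ⟨m, heq, hm⟩ | heq
      · have h1 := excess_of_agree hq (hd (n + 1)) m heq
        have h2 := val_step hq (hd (n + 1)) m
        have h3 : qgRem q 1 (m + 1) = q * qgRem q 1 m - alphaSeq q m := rfl
        have h4 := (qgRem_mem hq hM (one_mem hq hM) (m + 1)).1
        have h5 : (reflect M (tail c (n + 1)) m : ℝ) + 1 ≤ alphaSeq q m := by exact_mod_cast hm
        have h6 : 0 < c (n + 1 + m) := by
          have h7 : alphaSeq q m ≤ M := quasiGreedy_le hM 1 m
          have h8 : M - c (n + 1 + m) < alphaSeq q m := hm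
          omega
        have h9 := ih _ h6
        have h10 : tail (reflect M (tail c (n + 1))) (m + 1) = reflect M (tail c (n + 1 + m + 1)) := by
          funext i
          simp [tail, reflect, add_assoc]
        rw [h10] at h2
        have h11 : q ^ (m + 1) * (val q (reflect M (tail c (n + 1))) - 1) ≤
            val q (reflect M (tail c (n + 1 + m + 1))) - 1 := by
          rw [pow_succ', mul_assoc, h1]
          linarith
        rcases le_or_gt (val q (reflect M (tail c (n + 1))) - 1) 0 with hneg | hpos
        · exact (mul_nonpos_of_nonneg_of_nonpos (by positivity) hneg).trans htop
        · have h12 : q ≤ q ^ (m + 1) := le_self_pow₀ hq.le (by omega)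
          have h13 : q * (val q (reflect M (tail c (n + 1))) - 1) ≤
              val q (reflect M (tail c (n + 1 + m + 1))) - 1 :=
            (mul_le_mul_of_nonneg_right h12 hpos.le).trans h11
          calc q ^ (k + 1) * (val q (reflect M (tail c (n + 1))) - 1)
              = q ^ k * (q * (val q (reflect M (tail c (n + 1))) - 1)) := by ring
            _ ≤ q ^ k * (val q (reflect M (tail c (n + 1 + m + 1))) - 1) :=
              mul_le_mul_of_nonneg_left h13 (by positivity)
            _ ≤ _ := h9
      · have h1 : val q (alphaSeq q) = 1 :=
          (isExpansion_quasiGreedy hq hM (one_mem hq hM)).2.symm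
        rw [heq, h1]
        simpa using htop
  by_contra hgt
  have hpos : 0 < val q (reflect M (tail c (n + 1))) - 1 := by linarith
  obtain ⟨k, hk⟩ := pow_unbounded_of_one_lt
    ((M : ℝ) / (q - 1) / (val q (reflect M (tail c (n + 1))) - 1)) hq
  rw [div_lt_iff₀ hpos] at hk
  linarith [key k n hn]

end Lex

/-! ### The quasi-greedy side -/

section VSide

variable {q : ℝ} {M : ℕ}

/-- In an admissible sequence a nonzero digit is followed by a tail of positive value: otherwise
the reflected tail would have the value of `M^∞`, which exceeds `1` when `q < M + 1`. -/
theorem val_tail_pos (hq : 1 < q) (hlt : q < M + 1) {c : ℕ → ℕ} (hc : Admissible q M c) (n : ℕ)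
    (hn : 0 < c n) : 0 < val q (tail c (n + 1)) := by
  have h1 := val_add_reflect hq (c := tail c (n + 1)) (fun i => hc.1 _)
  have h2 := (hc.2 n).2 hn
  have h3 : 1 < (M : ℝ) / (q - 1) := by
    rw [lt_div_iff₀ (by linarith)]
    linarith
  linarith

theorem quasiGreedy_val (hq : 1 < q) (hM : ⌈q⌉ = (M : ℤ) + 1) (hlt : q < M + 1) {c : ℕ → ℕ}
    (hc : Admissible q M c) : quasiGreedy q (val q c) = c := by
  have hdig : ∀ n, qgDigit q (val q (tail c n)) = c n := by
    intro n
    have h1 := val_step hq hc.1 n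
    have h0 := val_nonneg hq (c := tail c (n + 1))
    by_cases hz : 0 < val q (tail c (n + 1))
    · exact qgDigit_eq_of_pos hM (hc.1 n) h1 hz (hc.2 n).1
    · have h2 : c n = 0 := by
        by_contra hne
        exact hz (val_tail_pos hq hlt hc n (Nat.pos_of_ne_zero hne))
      have h3 : q * val q (tail c n) = 0 := by
        rw [h1, h2]
        push_cast
        linarith
      rw [qgDigit, h3, h2]
      simp
  have hrem : ∀ n, qgRem q (val q c) n = val q (tail c n) := by
    intro n
    induction n with
    | zero => rw [tail_zero, qgRem]
    | succ k ih =>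
      rw [qgRem, ih, hdig]
      linarith [val_step hq hc.1 k]
  funext n
  rw [quasiGreedy, hrem, hdig]

theorem mem_VSeq_iff (hq : 1 < q) (hM : ⌈q⌉ = (M : ℤ) + 1) (hlt : q < M + 1) (c : ℕ → ℕ) :
    c ∈ VSeq q ↔ Admissible q M c := by
  have hJ : Jset q = Set.Icc 0 ((M : ℝ) / (q - 1)) := by
    rw [Jset, hM]
    push_cast
    rw [add_sub_cancel_right]
  constructor
  · rintro ⟨x, ⟨hx, hlex⟩, rfl⟩
    rw [hJ] at hx
    rw [topDigit_eq hM] at hlex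
    refine ⟨quasiGreedy_le hM x, fun n => ⟨fun hn => ?_, fun hn => ?_⟩⟩
    · have h1 := le_of_qgDigit_lt hM (y := qgRem q x n) hn
      have h2 : qgRem q x (n + 1) = q * qgRem q x n - qgDigit q (qgRem q x n) := rfl
      have h3 := val_tail_quasiGreedy hq hM hx (n + 1)
      simp only [h3]
      linarith
    · exact val_le_one_of_lex hq hM hlex n hn
  · intro hc
    have hqg := quasiGreedy_val hq hM hlt hc
    refine ⟨val q c, ⟨?_, ?_⟩, hqg⟩
    · rw [hJ]
      exact ⟨val_nonneg hq, val_le hq hc.1⟩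
    · rw [hqg, topDigit_eq hM]
      exact fun n hn => lexLe_of_admissible hq hM hlt hc n hn

end VSide

/-- Let `q > 1` be a non-integer and let `𝒢_q'` be the intersection of the
sets `𝒰_r'` over all `r > q` with `⌈q⌉ = ⌈r⌉`. Then `𝒢_q' = 𝒱_q'`. -/
theorem iInter_USeq_eq_VSeq (q : ℝ) (hq : 1 < q) (hni : ∀ k : ℤ, (k : ℝ) ≠ q) :
    (⋂ r ∈ {r : ℝ | q < r ∧ ⌈q⌉ = ⌈r⌉}, USeq r) = VSeq q := by
  have hpos : 1 < ⌈q⌉ := Int.lt_ceil.mpr (by exact_mod_cast hq)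
  obtain ⟨M, hM⟩ : ∃ M : ℕ, ⌈q⌉ = (M : ℤ) + 1 := ⟨⌈q⌉.toNat - 1, by omega⟩
  have hlt : q < M + 1 := by
    refine lt_of_le_of_ne (base_le hM) (fun h => hni (M + 1) ?_)
    push_cast
    exact h.symm
  ext c
  rw [mem_iInter_iff hq hM hlt, mem_VSeq_iff hq hM hlt]
end

section
/- For every non-integer real number q > 1 (in particular for every q ∈ U that is not an integer), the set G_q' ∖ U_q' is countable, where G_q' is the intersection of the sets U_r' over all r > q with ⌈q⌉ = ⌈r⌉. Consequently, membership of q in U does not imply that G_q' ∖ U_q' is uncountable. -/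
noncomputable section

namespace UnivoqueExpansions

/-- The value `∑ f_i / r^(i+1)` of a sequence of real digits in base `r`. -/
def S (r : ℝ) (f : ℕ → ℝ) : ℝ := ∑' i : ℕ, f i / r ^ (i + 1)

/-- The value in base `r` of the tail `c_n c_{n+1} …` of a digit sequence. -/
def tailValue (r : ℝ) (c : ℕ → ℕ) (n : ℕ) : ℝ := S r (fun i => (c (i + n) : ℝ))

/-! ### Values of sequences -/

lemma hasSum_const {r : ℝ} (hr : 1 < r) (M : ℝ) :
    HasSum (fun i : ℕ => M / r ^ (i + 1)) (M / (r - 1)) := by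
  have h0 : r ≠ 0 := by positivity
  have h1 : r - 1 ≠ 0 := by linarith
  have h := (hasSum_geometric_of_lt_one (r := r⁻¹) (by positivity)
    (inv_lt_one_of_one_lt₀ hr)).mul_left (M / r)
  have e : M / r * (1 - r⁻¹)⁻¹ = M / (r - 1) := by
    have : 1 - r⁻¹ = (r - 1) / r := by field_simp
    rw [this]; field_simp
  rw [e] at h
  have e' : (fun i : ℕ => M / r ^ (i + 1)) = fun i : ℕ => M / r * r⁻¹ ^ i := by
    ext i
    rw [pow_succ, inv_pow]
    field_simp
  rwa [e']

lemma summable_digits {r : ℝ} (hr : 1 < r) {M : ℝ} {f : ℕ → ℝ} (h0 : ∀ i, 0 ≤ f i)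
    (hM : ∀ i, f i ≤ M) : Summable (fun i : ℕ => f i / r ^ (i + 1)) := by
  refine Summable.of_nonneg_of_le (fun i => ?_) (fun i => ?_) (hasSum_const hr M).summable
  · have := h0 i
    positivity
  · gcongr
    exact hM i

lemma S_nonneg {r : ℝ} (hr : 1 < r) {f : ℕ → ℝ} (h0 : ∀ i, 0 ≤ f i) : 0 ≤ S r f :=
  tsum_nonneg fun i => by have := h0 i; positivity

lemma S_le {r : ℝ} (hr : 1 < r) {M : ℝ} {f : ℕ → ℝ} (h0 : ∀ i, 0 ≤ f i)
    (hM : ∀ i, f i ≤ M) : S r f ≤ M / (r - 1) := by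
  rw [← (hasSum_const hr M).tsum_eq]
  refine Summable.tsum_le_tsum (fun i => ?_) (summable_digits hr h0 hM)
    (hasSum_const hr M).summable
  gcongr
  exact hM i

lemma S_reflect {r : ℝ} (hr : 1 < r) {M : ℝ} {f : ℕ → ℝ} (h0 : ∀ i, 0 ≤ f i)
    (hM : ∀ i, f i ≤ M) : S r (fun i => M - f i) = M / (r - 1) - S r f := by
  rw [← (hasSum_const hr M).tsum_eq, S, S,
    ← (hasSum_const hr M).summable.tsum_sub (summable_digits hr h0 hM)]
  simp only [sub_div]

lemma S_split {r : ℝ} (hr : 1 < r) {M : ℝ} {f : ℕ → ℝ} (h0 : ∀ i, 0 ≤ f i)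
    (hM : ∀ i, f i ≤ M) (n : ℕ) :
    S r f = ∑ i ∈ Finset.range n, f i / r ^ (i + 1) + S r (fun i => f (i + n)) / r ^ n := by
  rw [S, ← (summable_digits hr h0 hM).sum_add_tsum_nat_add n, S, ← tsum_div_const]
  congr 2
  ext i
  rw [div_div, ← pow_add]
  congr 2
  ring

lemma tailValue_nonneg {r : ℝ} (hr : 1 < r) (c : ℕ → ℕ) (n : ℕ) : 0 ≤ tailValue r c n :=
  S_nonneg hr fun _ => Nat.cast_nonneg _

lemma tailValue_le {r : ℝ} (hr : 1 < r) {M : ℕ} {c : ℕ → ℕ} (hc : ∀ i, c i ≤ M) (n : ℕ) :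
    tailValue r c n ≤ M / (r - 1) :=
  S_le hr (fun _ => Nat.cast_nonneg _) fun _ => Nat.cast_le.2 (hc _)

lemma mul_tailValue {r : ℝ} (hr : 1 < r) {M : ℕ} {c : ℕ → ℕ} (hc : ∀ i, c i ≤ M) (n : ℕ) :
    r * tailValue r c n = c n + tailValue r c (n + 1) := by
  have h0 : r ≠ 0 := by positivity
  have h := S_split hr (M := M) (f := fun i => (c (i + n) : ℝ)) (fun _ => Nat.cast_nonneg _)
    (fun _ => Nat.cast_le.2 (hc _)) 1
  simp only [Finset.sum_range_one, zero_add, pow_one] at h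
  have e : (fun i => (c (i + 1 + n) : ℝ)) = fun i => (c (i + (n + 1)) : ℝ) := by
    ext i; congr 2; ring
  rw [e] at h
  rw [tailValue, h, tailValue]
  field_simp

/-- Two sequences with the same value agree as soon as, at each position, equality of the values
of the tails forces equality of the leading digits. -/
lemma eq_of_digit_determined {r : ℝ} (hr : 1 < r) {M : ℕ} {c c' : ℕ → ℕ} (hc : ∀ i, c i ≤ M)
    (hc' : ∀ i, c' i ≤ M) (k : ℕ) (h0 : tailValue r c k = tailValue r c' k)
    (hstep : ∀ n, (c n : ℝ) + tailValue r c (n + 1) = c' n + tailValue r c' (n + 1) →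
      c n = c' n) :
    ∀ n, k ≤ n → c n = c' n := by
  have step : ∀ n, tailValue r c n = tailValue r c' n →
      (c n : ℝ) + tailValue r c (n + 1) = c' n + tailValue r c' (n + 1) := by
    intro n h
    rw [← mul_tailValue hr hc, ← mul_tailValue hr hc', h]
  have key : ∀ n, k ≤ n → tailValue r c n = tailValue r c' n := by
    intro n hn
    induction n, hn using Nat.le_induction with
    | base => exact h0
    | succ n _ ih =>
      have h1 := step n ih
      rw [hstep n h1] at h1
      linarith
  exact fun n hn => hstep n (step n (key n hn))

/-! ### Existence of expansions -/

lemma exists_digit {r : ℝ} (hr : 1 < r) {M : ℕ} (hM1 : r ≤ M + 1) {y : ℝ} (h0 : 0 ≤ y)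
    (hy : y ≤ M / (r - 1)) : ∃ d : ℕ, d ≤ M ∧ 0 ≤ r * y - d ∧ r * y - d ≤ M / (r - 1) := by
  have hr1 : 0 < r - 1 := by linarith
  have hK : 1 ≤ (M : ℝ) / (r - 1) := by rw [le_div_iff₀ hr1]; linarith
  have hry : 0 ≤ r * y := by positivity
  by_cases h : ⌊r * y⌋₊ ≤ M
  · refine ⟨_, h, ?_, ?_⟩
    · linarith [Nat.floor_le hry]
    · linarith [Nat.lt_floor_add_one (r * y)]
  · have hM : (M : ℝ) ≤ r * y := (Nat.le_floor_iff hry).1 (by omega)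
    refine ⟨M, le_rfl, by linarith, ?_⟩
    -- The fixed point of `y ↦ r y - M` is `M / (r - 1)`.
    have : r * (M / (r - 1)) - M = M / (r - 1) := by field_simp; ring
    have : r * y ≤ r * (M / (r - 1)) := by gcongr
    linarith

lemma exists_expansion {r : ℝ} (hr : 1 < r) {M : ℕ} (hM1 : r ≤ M + 1) {x : ℝ} (h0 : 0 ≤ x)
    (hx : x ≤ M / (r - 1)) : ∃ c : ℕ → ℕ, (∀ i, c i ≤ M) ∧ tailValue r c 0 = x := by
  have hr0 : 0 < r := by linarith
  choose d hdM hd0 hdK using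
    fun y : Set.Icc (0 : ℝ) (M / (r - 1)) => exists_digit hr hM1 y.2.1 y.2.2
  let rem : ℕ → Set.Icc (0 : ℝ) (M / (r - 1)) := fun n =>
    Nat.rec ⟨x, h0, hx⟩ (fun _ y => ⟨r * y - d y, hd0 y, hdK y⟩) n
  have hrem : ∀ n, (rem (n + 1)).1 = r * (rem n).1 - (d (rem n) : ℝ) := fun n => rfl
  refine ⟨fun n => d (rem n), fun i => hdM _, ?_⟩
  have hpart : ∀ n, ∑ i ∈ Finset.range n, (d (rem i) : ℝ) / r ^ (i + 1)
      = x - (rem n).1 * (r⁻¹) ^ n := by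
    intro n
    induction n with
    | zero => simp [rem]
    | succ n ih =>
      rw [Finset.sum_range_succ, ih, hrem, inv_pow, inv_pow, pow_succ]
      field_simp
      ring
  have hlim : Filter.Tendsto (fun n => x - (rem n).1 * (r⁻¹) ^ n) Filter.atTop (nhds x) := by
    have h1 : Filter.Tendsto (fun n : ℕ => (M / (r - 1) : ℝ) * (r⁻¹) ^ n) Filter.atTop
        (nhds 0) := by
      simpa using (tendsto_pow_atTop_nhds_zero_of_lt_one (r := r⁻¹) (by positivity)
        (inv_lt_one_of_one_lt₀ hr)).const_mul (M / (r - 1) : ℝ)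
    have h2 : Filter.Tendsto (fun n : ℕ => (rem n).1 * (r⁻¹) ^ n) Filter.atTop (nhds 0) := by
      refine squeeze_zero (fun n => ?_) (fun n => ?_) h1
      · exact mul_nonneg (rem n).2.1 (by positivity)
      · exact mul_le_mul_of_nonneg_right (rem n).2.2 (by positivity)
    simpa using h2.const_sub x
  have hs : Summable (fun i : ℕ => (d (rem i) : ℝ) / r ^ (i + 1)) :=
    summable_digits (M := M) hr (fun _ => Nat.cast_nonneg _) fun _ => Nat.cast_le.2 (hdM _)
  have ht := hs.hasSum.tendsto_sum_nat
  simp only [hpart] at ht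
  exact tendsto_nhds_unique ht hlim

/-! ### Characterization of univoque sequences -/

lemma digit_lt_iff {r : ℝ} {M : ℕ} (hM : (M : ℝ) < r) (hM1 : r ≤ M + 1) (d : ℕ) :
    (d : ℝ) < r ↔ d ≤ M := by
  constructor
  · intro h
    have : (d : ℝ) < (M + 1 : ℕ) := by push_cast; linarith
    exact Nat.lt_succ_iff.1 (Nat.cast_lt.1 this)
  · intro h
    have : (d : ℝ) ≤ M := Nat.cast_le.2 h
    linarith

lemma USeq.digit_le {r : ℝ} {M : ℕ} (hM : (M : ℝ) < r) (hM1 : r ≤ M + 1) {c : ℕ → ℕ}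
    (hc : c ∈ USeq r) (i : ℕ) : c i ≤ M := by
  obtain ⟨x, hx, -⟩ := hc
  exact (digit_lt_iff hM hM1 _).1 (hx.1 i)

/-- In a univoque sequence, no digit can be exchanged for another digit `e` by altering only the
digits that follow it. -/
lemma USeq.digit_eq {r : ℝ} (hr : 1 < r) {M : ℕ} (hM : (M : ℝ) < r) (hM1 : r ≤ M + 1)
    {c : ℕ → ℕ} (hc : c ∈ USeq r) (n e : ℕ) (he : e ≤ M)
    (h0 : 0 ≤ c n + tailValue r c (n + 1) - e)
    (hK : c n + tailValue r c (n + 1) - e ≤ M / (r - 1)) : e = c n := by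
  have hcM := USeq.digit_le hM hM1 hc
  obtain ⟨d, hdM, hd⟩ := exists_expansion hr hM1 h0 hK
  let c' : ℕ → ℕ := fun i => if i < n then c i else if i = n then e else d (i - (n + 1))
  have hc'M : ∀ i, c' i ≤ M := by
    intro i
    simp only [c']
    split_ifs
    · exact hcM i
    · exact he
    · exact hdM _
  have hn : c' n = e := by simp [c']
  have htail : tailValue r c' (n + 1) = tailValue r d 0 := by
    simp only [tailValue]
    congr 1
    ext i
    have h1 : ¬ (i + (n + 1) < n) := by omega
    have h2 : ¬ (i + (n + 1) = n) := by omega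
    simp [c', h1, h2]
  have hval : tailValue r c' n = tailValue r c n := by
    have h1 := mul_tailValue hr hc'M n
    have h2 := mul_tailValue hr hcM n
    rw [hn, htail, hd] at h1
    have : r * tailValue r c' n = r * tailValue r c n := by rw [h1, h2]; ring
    exact mul_left_cancel₀ (by positivity) this
  have hS : S r (fun i => (c' i : ℝ)) = S r (fun i => (c i : ℝ)) := by
    rw [S_split hr (M := M) (fun _ => Nat.cast_nonneg _) (fun i => Nat.cast_le.2 (hc'M i)) n,
      S_split hr (M := M) (fun _ => Nat.cast_nonneg _) (fun i => Nat.cast_le.2 (hcM i)) n]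
    congr 1
    · refine Finset.sum_congr rfl fun i hi => ?_
      simp [c', Finset.mem_range.1 hi]
    · exact congrArg (· / r ^ n) hval
  obtain ⟨x, hx, huniq⟩ := hc
  have := huniq c' ⟨fun i => (digit_lt_iff hM hM1 _).2 (hc'M i), hx.2.trans hS.symm⟩
  rw [← hn, this]

lemma USeq.tail_lt {r : ℝ} (hr : 1 < r) {M : ℕ} (hM : (M : ℝ) < r) (hM1 : r ≤ M + 1)
    {c : ℕ → ℕ} (hc : c ∈ USeq r) (n : ℕ) (hn : c n < M) : tailValue r c (n + 1) < 1 := by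
  by_contra! h
  have hle := tailValue_le hr (USeq.digit_le hM hM1 hc) (n + 1)
  have := USeq.digit_eq hr hM hM1 hc n (c n + 1) hn (by push_cast; linarith)
    (by push_cast; linarith)
  omega

lemma USeq.tail_gt {r : ℝ} (hr : 1 < r) {M : ℕ} (hM : (M : ℝ) < r) (hM1 : r ≤ M + 1)
    {c : ℕ → ℕ} (hc : c ∈ USeq r) (n : ℕ) (hn : 0 < c n) :
    M / (r - 1) - 1 < tailValue r c (n + 1) := by
  by_contra! h
  have h0 := tailValue_nonneg hr c (n + 1)
  have hcM := USeq.digit_le hM hM1 hc n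
  have hcast : ((c n - 1 : ℕ) : ℝ) = c n - 1 := by
    rw [Nat.cast_sub hn, Nat.cast_one]
  have := USeq.digit_eq hr hM hM1 hc n (c n - 1) (by omega) (by rw [hcast]; linarith)
    (by rw [hcast]; linarith)
  omega

lemma mem_USeq_of_strict {r : ℝ} (hr : 1 < r) {M : ℕ} (hM : (M : ℝ) < r) (hM1 : r ≤ M + 1)
    {c : ℕ → ℕ} (hcM : ∀ i, c i ≤ M) (hlt : ∀ n, c n < M → tailValue r c (n + 1) < 1)
    (hgt : ∀ n, 0 < c n → M / (r - 1) - 1 < tailValue r c (n + 1)) : c ∈ USeq r := by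
  refine ⟨_, ⟨fun i => (digit_lt_iff hM hM1 _).2 (hcM i), rfl⟩, fun c' hc' => ?_⟩
  have hc'M : ∀ i, c' i ≤ M := fun i => (digit_lt_iff hM hM1 _).1 (hc'.1 i)
  have hval : tailValue r c 0 = tailValue r c' 0 := hc'.2
  ext n
  refine (eq_of_digit_determined hr hcM hc'M 0 hval (fun n h => ?_) n n.zero_le).symm
  have h0 := tailValue_nonneg hr c' (n + 1)
  have hK := tailValue_le hr hc'M (n + 1)
  rcases lt_trichotomy (c n) (c' n) with hlt' | heq | hgt'
  · have h1 := hlt n (hlt'.trans_le (hc'M n))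
    have h2 : (c n : ℝ) + 1 ≤ c' n := by exact_mod_cast hlt'
    linarith
  · exact heq
  · have h1 := hgt n (by omega)
    have h2 : (c' n : ℝ) + 1 ≤ c n := by exact_mod_cast hgt'
    linarith

/-! ### Weakly univoque sequences -/

/-- Sequences with digits in `{0, …, M}` satisfying in base `q` the non-strict versions of the
inequalities that characterize univoque sequences. -/
structure WeaklyUnivoque (q : ℝ) (M : ℕ) (c : ℕ → ℕ) : Prop where
  digit_le : ∀ i, c i ≤ M
  tail_le : ∀ n, c n < M → tailValue q c (n + 1) ≤ 1
  le_tail : ∀ n, 0 < c n → M / (q - 1) - 1 ≤ tailValue q c (n + 1)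

/-- A weakly univoque sequence is determined, from position `k` on, by the value of its tail: as
`M / (q - 1) > 1`, the ranges of admissible tail values after two different digits are disjoint. -/
lemma WeaklyUnivoque.eq_of_value_eq {q : ℝ} (hq : 1 < q) {M : ℕ} (hM1 : q < M + 1)
    {c c' : ℕ → ℕ} (hc : WeaklyUnivoque q M c) (hc' : WeaklyUnivoque q M c') (k : ℕ)
    (h : tailValue q c k = tailValue q c' k) : ∀ n, k ≤ n → c n = c' n := by
  have hK : 1 < (M : ℝ) / (q - 1) := by rw [lt_div_iff₀ (by linarith)]; linarith
  refine eq_of_digit_determined hq hc.digit_le hc'.digit_le k h fun n hn => ?_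
  rcases lt_trichotomy (c n) (c' n) with hlt | heq | hgt
  · have h1 := hc.tail_le n (hlt.trans_le (hc'.digit_le n))
    have h2 := hc'.le_tail n (by omega)
    have h3 : (c n : ℝ) + 1 ≤ c' n := by exact_mod_cast hlt
    linarith
  · exact heq
  · have h1 := hc'.tail_le n (hgt.trans_le (hc.digit_le n))
    have h2 := hc.le_tail n (by omega)
    have h3 : (c' n : ℝ) + 1 ≤ c n := by exact_mod_cast hgt
    linarith

lemma countable_tailValue_eq {q : ℝ} (hq : 1 < q) {M : ℕ} (hM1 : q < M + 1) (k : ℕ) (v : ℝ) :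
    {c | WeaklyUnivoque q M c ∧ tailValue q c k = v}.Countable := by
  have hinj : Set.InjOn (fun (c : ℕ → ℕ) (i : Fin k) => c i)
      {c | WeaklyUnivoque q M c ∧ tailValue q c k = v} := by
    rintro c ⟨hc, hv⟩ c' ⟨hc', hv'⟩ h
    ext n
    rcases lt_or_ge n k with hn | hn
    · exact congrFun h ⟨n, hn⟩
    · exact hc.eq_of_value_eq hq hM1 hc' k (hv.trans hv'.symm) n hn
  exact Set.MapsTo.countable_of_injOn (Set.mapsTo_univ _ _) hinj Set.countable_univ

/-- A bound on values in all bases `r > q` close to `q` persists in base `q`: it suffices to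
pass to the limit in each partial sum. -/
lemma S_le_one_of_right {q R : ℝ} (hq : 1 < q) (hR : q < R) {M : ℝ} {f : ℕ → ℝ}
    (h0 : ∀ i, 0 ≤ f i) (hM : ∀ i, f i ≤ M) (h : ∀ r, q < r → r < R → S r f ≤ 1) :
    S q f ≤ 1 := by
  refine (summable_digits hq h0 hM).tsum_le_of_sum_range_le fun n => ?_
  have hcont : ContinuousAt (fun r : ℝ => ∑ i ∈ Finset.range n, f i / r ^ (i + 1)) q := by
    refine tendsto_finsetSum _ fun i _ => ?_
    have hne : q ^ (i + 1) ≠ 0 := by positivity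
    exact tendsto_const_nhds.div (continuousAt_id.pow (i + 1)) hne
  refine le_of_tendsto (hcont.tendsto.mono_left (nhdsWithin_le_nhds (s := Set.Ioi q))) ?_
  filter_upwards [Ioo_mem_nhdsGT hR] with r hr
  have hr1 : 1 < r := hq.trans hr.1
  refine le_trans ?_ (h r hr.1 hr.2)
  refine (summable_digits hr1 h0 hM).sum_le_tsum _ fun i _ => ?_
  have := h0 i
  positivity

lemma weaklyUnivoque_of_right {q : ℝ} (hq : 1 < q) {M : ℕ} (hM : (M : ℝ) < q)
    (hM1 : q < M + 1) {c : ℕ → ℕ} (hc : ∀ r, q < r → r < M + 1 → c ∈ USeq r) :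
    WeaklyUnivoque q M c := by
  have hcM : ∀ i, c i ≤ M := by
    obtain ⟨r, hr, hr'⟩ := exists_between hM1
    exact USeq.digit_le (hM.trans hr) hr'.le (hc r hr hr')
  refine ⟨hcM, fun n hn => ?_, fun n hn => ?_⟩
  · refine S_le_one_of_right hq hM1 (M := M) (fun _ => Nat.cast_nonneg _)
      (fun i => Nat.cast_le.2 (hcM _)) fun r hr hr' => ?_
    exact (USeq.tail_lt (hq.trans hr) (hM.trans hr) hr'.le (hc r hr hr') n hn).le
  · have hd0 : ∀ i, (0 : ℝ) ≤ c (i + (n + 1)) := fun _ => Nat.cast_nonneg _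
    have hdM : ∀ i, (c (i + (n + 1)) : ℝ) ≤ M := fun i => Nat.cast_le.2 (hcM _)
    have key : S q (fun i => (M : ℝ) - c (i + (n + 1))) ≤ 1 := by
      refine S_le_one_of_right hq hM1 (M := M) (fun i => by linarith [hdM i])
        (fun i => by linarith [hd0 i]) fun r hr hr' => ?_
      have := USeq.tail_gt (hq.trans hr) (hM.trans hr) hr'.le (hc r hr hr') n hn
      rw [S_reflect (hq.trans hr) hd0 hdM]
      rw [tailValue] at this
      linarith
    rw [S_reflect hq hd0 hdM] at key
    rw [tailValue]
    linarith

end UnivoqueExpansions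

end

open UnivoqueExpansions

/-- For every non-integer `q > 1` (in particular for every non-integer
`q ∈ 𝒰`) the set `𝒢_q' \ 𝒰_q'` is countable, where `𝒢_q' = ⋂ 𝒰_r'` over `r > q` with
`⌈q⌉ = ⌈r⌉`. -/
theorem iInter_USeq_diff_USeq_countable (q : ℝ) (hq : 1 < q) (hni : ∀ k : ℤ, (k : ℝ) ≠ q) :
    ((⋂ r ∈ {r : ℝ | q < r ∧ ⌈q⌉ = ⌈r⌉}, USeq r) \ USeq q).Countable := by
  have hq0 : 0 ≤ q := by linarith
  obtain ⟨M, hMdef⟩ : ∃ M : ℕ, M = ⌊q⌋₊ := ⟨_, rfl⟩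
  have hM : (M : ℝ) < q :=
    lt_of_le_of_ne (hMdef ▸ Nat.floor_le hq0) (by exact_mod_cast hni M)
  have hM1 : q < M + 1 := hMdef ▸ Nat.lt_floor_add_one q
  have hceil : ∀ r : ℝ, (M : ℝ) < r → r < M + 1 → ⌈r⌉ = (M : ℤ) + 1 := by
    intro r h1 h2
    rw [Int.ceil_eq_iff]
    push_cast
    exact ⟨by linarith, h2.le⟩
  refine Set.Countable.mono ?_ (Set.countable_iUnion fun n : ℕ =>
    (countable_tailValue_eq hq hM1 n 1).union
      (countable_tailValue_eq hq hM1 n ((M : ℝ) / (q - 1) - 1)))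
  rintro c ⟨hG, hU⟩
  have hW : WeaklyUnivoque q M c := by
    refine weaklyUnivoque_of_right hq hM hM1 fun r hr hr' => ?_
    refine Set.mem_iInter₂.1 hG r ⟨hr, ?_⟩
    rw [hceil q hM hM1, hceil r (hM.trans hr) hr']
  by_contra hcon
  simp only [Set.mem_iUnion, Set.mem_union, Set.mem_ofPred_eq, not_exists, not_or, not_and] at hcon
  refine hU (mem_USeq_of_strict hq hM hM1.le hW.digit_le (fun n hn => ?_) fun n hn => ?_)
  · exact lt_of_le_of_ne (hW.tail_le n hn) ((hcon (n + 1)).1 hW)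
  · exact lt_of_le_of_ne (hW.le_tail n hn) (Ne.symm ((hcon (n + 1)).2 hW))
end
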